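/- (Key contraction estimate in the proof of Theorem 2.) Let n ≥ 2, let L be a graph Laplacian, and let g : ℝ → ℝ be strictly increasing and satisfy the ε-separation condition for some ε > 0: for all α ≠ β and all v₁ ∈ K[g](α), v₂ ∈ K[g](β), one has (v₁ - v₂)/(α - β) ≥ ε. Then every Filippov solution (x, γ) of the protocol ẋ_i = -∑_j L i j g(x_j) satisfies, for all 0 ≤ s ≤ t, max_i x t i - min_i x t i ≤ exp(-ε · η(-L) · (t - s)) · (max_i x s i - min_i x s i). -/

import Mathlib

open MeasureTheory Function

/-- `η(-L)`: the minimum over pairs `i ≠ j` of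
`(-L i j) + (-L j i) + ∑_{k ≠ i, j} min (-L i k) (-L j k)`. -/
noncomputable def etaNeg {n : ℕ} (L : Matrix (Fin n) (Fin n) ℝ) : ℝ :=
  sInf {x : ℝ | ∃ i j : Fin n, i ≠ j ∧
    x = (-L i j) + (-L j i) +
      ∑ k ∈ Finset.univ.filter (fun k => k ≠ i ∧ k ≠ j), min (-L i k) (-L j k)}

/-- Maximum entry of a vector on a nonempty `Fin n`. -/
noncomputable def vecMax {n : ℕ} (hn : 0 < n) (v : Fin n → ℝ) : ℝ :=
  Finset.univ.sup' ⟨⟨0, hn⟩, Finset.mem_univ _⟩ v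

/-- Minimum entry of a vector on a nonempty `Fin n`. -/
noncomputable def vecMin {n : ℕ} (hn : 0 < n) (v : Fin n → ℝ) : ℝ :=
  Finset.univ.inf' ⟨⟨0, hn⟩, Finset.mem_univ _⟩ v

/-- The quantities minimised in `etaNeg` are nonnegative. -/
lemma etaNeg_terms_nonneg {n : ℕ} (L : Matrix (Fin n) (Fin n) ℝ)
    (hL1 : ∀ i j, i ≠ j → L i j ≤ 0) (i j : Fin n) (hij : i ≠ j) :
    0 ≤ (-L i j) + (-L j i) +
      ∑ k ∈ Finset.univ.filter (fun k => k ≠ i ∧ k ≠ j), min (-L i k) (-L j k) := by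
  have h1 := hL1 i j hij
  have h2 := hL1 j i hij.symm
  have h3 : 0 ≤ ∑ k ∈ Finset.univ.filter (fun k => k ≠ i ∧ k ≠ j),
      min (-L i k) (-L j k) := by
    apply Finset.sum_nonneg
    intro k hk
    rw [Finset.mem_filter] at hk
    have h4 := hL1 i k hk.2.1.symm
    have h5 := hL1 j k hk.2.2.symm
    exact le_min (by linarith) (by linarith)
  linarith

lemma etaNeg_nonneg {n : ℕ} (L : Matrix (Fin n) (Fin n) ℝ)
    (hL1 : ∀ i j, i ≠ j → L i j ≤ 0) : 0 ≤ etaNeg L := by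
  apply Real.sInf_nonneg
  rintro x ⟨i, j, hij, rfl⟩
  exact etaNeg_terms_nonneg L hL1 i j hij

lemma etaNeg_le {n : ℕ} (L : Matrix (Fin n) (Fin n) ℝ)
    (hL1 : ∀ i j, i ≠ j → L i j ≤ 0) (i j : Fin n) (hij : i ≠ j) :
    etaNeg L ≤ (-L i j) + (-L j i) +
      ∑ k ∈ Finset.univ.filter (fun k => k ≠ i ∧ k ≠ j), min (-L i k) (-L j k) := by
  apply csInf_le
  · refine ⟨0, ?_⟩
    rintro x ⟨i, j, hij, rfl⟩
    exact etaNeg_terms_nonneg L hL1 i j hij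
  · exact ⟨i, j, hij, rfl⟩

lemma pair_bound {n : ℕ} (L : Matrix (Fin n) (Fin n) ℝ)
    (hL1 : ∀ i j, i ≠ j → L i j ≤ 0) (hL2 : ∀ i, ∑ j, L i j = 0)
    (w : Fin n → ℝ) (i j : Fin n) (hij : i ≠ j)
    (hi : ∀ k, w k ≤ w i) (hj : ∀ k, w j ≤ w k) :
    (-∑ k, L i k * w k) - (-∑ k, L j k * w k) ≤ -(etaNeg L * (w i - w j)) := by
  have e1 : ∑ k, L i k * w k = ∑ k, L i k * (w k - w i) := by
    simp only [mul_sub, Finset.sum_sub_distrib, ← Finset.sum_mul, hL2]; simp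
  have e2 : ∑ k, L j k * w k = ∑ k, L j k * (w k - w j) := by
    simp only [mul_sub, Finset.sum_sub_distrib, ← Finset.sum_mul, hL2]; simp
  have e3 : (-L i j) + (-L j i) +
      ∑ k ∈ Finset.univ.filter (fun k => k ≠ i ∧ k ≠ j), min (-L i k) (-L j k)
      = ∑ k, ((if k = j then -L i k else 0) + (if k = i then -L j k else 0)
        + (if k ≠ i ∧ k ≠ j then min (-L i k) (-L j k) else 0)) := by
    rw [Finset.sum_add_distrib, Finset.sum_add_distrib, Finset.sum_filter]
    simp
  have e4 := etaNeg_le L hL1 i j hij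
  have e5 : etaNeg L * (w i - w j) ≤ (∑ k, ((if k = j then -L i k else 0)
      + (if k = i then -L j k else 0)
        + (if k ≠ i ∧ k ≠ j then min (-L i k) (-L j k) else 0))) * (w i - w j) := by
    rw [← e3]
    exact mul_le_mul_of_nonneg_right e4 (by linarith [hi j])
  rw [e1, e2]
  refine le_trans ?_ (neg_le_neg e5)
  have e6 : (∑ k, ((if k = j then -L i k else 0)
      + (if k = i then -L j k else 0)
        + (if k ≠ i ∧ k ≠ j then min (-L i k) (-L j k) else 0))) * (w i - w j)
      ≤ ∑ k, (L i k * (w k - w i) - L j k * (w k - w j)) := by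
    rw [Finset.sum_mul]
    apply Finset.sum_le_sum
    intro k _
    by_cases h1 : k = i
    · subst h1
      simp [hij]
    · by_cases h2 : k = j
      · subst h2
        simp [h1]
        linarith
      · simp only [h1, h2, if_false, ne_eq, not_false_eq_true, and_self, if_true, zero_add]
        have m1 : min (-L i k) (-L j k) ≤ -L i k := min_le_left _ _
        have m2 : min (-L i k) (-L j k) ≤ -L j k := min_le_right _ _
        nlinarith [mul_le_mul_of_nonneg_right m1 (sub_nonneg.2 (hi k)),
          mul_le_mul_of_nonneg_right m2 (sub_nonneg.2 (hj k))]
  rw [Finset.sum_sub_distrib] at e6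
  linarith

lemma le_vecMax {n : ℕ} (hn : 0 < n) (v : Fin n → ℝ) (i : Fin n) : v i ≤ vecMax hn v :=
  Finset.le_sup' v (Finset.mem_univ i)

lemma vecMin_le {n : ℕ} (hn : 0 < n) (v : Fin n → ℝ) (i : Fin n) : vecMin hn v ≤ v i :=
  Finset.inf'_le v (Finset.mem_univ i)

lemma exists_vecMax {n : ℕ} (hn : 0 < n) (v : Fin n → ℝ) : ∃ i, vecMax hn v = v i := by
  obtain ⟨i, _, h⟩ := Finset.exists_mem_eq_sup' ⟨⟨0, hn⟩, Finset.mem_univ _⟩ v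
  exact ⟨i, h⟩

lemma exists_vecMin {n : ℕ} (hn : 0 < n) (v : Fin n → ℝ) : ∃ i, vecMin hn v = v i := by
  obtain ⟨i, _, h⟩ := Finset.exists_mem_eq_inf' ⟨⟨0, hn⟩, Finset.mem_univ _⟩ v
  exact ⟨i, h⟩

/-- Spread of a vector. -/
noncomputable def spread {n : ℕ} (hn : 0 < n) (v : Fin n → ℝ) : ℝ := vecMax hn v - vecMin hn v

lemma spread_sub_le {n : ℕ} (hn : 0 < n) (u v : Fin n → ℝ) :
    spread hn u - spread hn v ≤ 2 * dist u v := by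
  obtain ⟨i, hi⟩ := exists_vecMax hn u
  obtain ⟨j, hj⟩ := exists_vecMin hn u
  have h1 := le_vecMax hn v i
  have h2 := vecMin_le hn v j
  have h3 := dist_le_pi_dist u v i
  have h4 := dist_le_pi_dist u v j
  rw [Real.dist_eq] at h3 h4
  have h5 := le_abs_self (u i - v i)
  have h6 := neg_abs_le (u j - v j)
  unfold spread
  linarith

lemma dist_spread_le {n : ℕ} (hn : 0 < n) (u v : Fin n → ℝ) :
    dist (spread hn u) (spread hn v) ≤ 2 * dist u v := by
  rw [Real.dist_eq, abs_le]
  have h1 := spread_sub_le hn u v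
  have h2 := spread_sub_le hn v u
  rw [dist_comm] at h2
  constructor <;> linarith

/-- Pointwise estimate for the derivative of the spread. -/
lemma deriv_spread_le {n : ℕ} (hn : 0 < n) (L : Matrix (Fin n) (Fin n) ℝ)
    (hL1 : ∀ i j, i ≠ j → L i j ≤ 0) (hL2 : ∀ i, ∑ j, L i j = 0)
    (ε : ℝ) (hε : 0 < ε) (y : ℝ → Fin n → ℝ) (w : Fin n → ℝ) (u d : ℝ)
    (hsep : ∀ i j, y u i < y u j → ε * (y u j - y u i) ≤ w j - w i)
    (hy : ∀ i, HasDerivAt (fun t => y t i) (-∑ k, L i k * w k) u)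
    (hV : HasDerivAt (fun t => spread hn (y t)) d u) :
    d ≤ -(ε * etaNeg L) * spread hn (y u) := by
  classical
  obtain ⟨i0, hi0⟩ := exists_vecMax hn (y u)
  obtain ⟨j0, hj0⟩ := exists_vecMin hn (y u)
  obtain ⟨i, hiM, hi⟩ := Finset.exists_max_image
    (Finset.univ.filter (fun k => y u k = vecMax hn (y u))) w ⟨i0, by simp [hi0]⟩
  obtain ⟨j, hjM, hj⟩ := Finset.exists_min_image
    (Finset.univ.filter (fun k => y u k = vecMin hn (y u))) w ⟨j0, by simp [hj0]⟩
  simp only [Finset.mem_filter, Finset.mem_univ, true_and] at hiM hi hjM hj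
  have hi' : ∀ k, w k ≤ w i := by
    intro k
    rcases (le_vecMax hn (y u) k).eq_or_lt with h | h
    · exact hi k h
    · rw [← hiM] at h
      have := hsep k i h
      have := mul_pos hε (sub_pos.2 h)
      linarith
  have hj' : ∀ k, w j ≤ w k := by
    intro k
    rcases (vecMin_le hn (y u) k).eq_or_lt with h | h
    · exact hj k h.symm
    · rw [← hjM] at h
      have := hsep j k h
      have := mul_pos hε (sub_pos.2 h)
      linarith
  have hd : d = (-∑ k, L i k * w k) - (-∑ k, L j k * w k) := by
    have hD := hV.sub ((hy i).sub (hy j))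
    have hmin : IsLocalMin (fun t => spread hn (y t) - (y t i - y t j)) u := by
      refine Filter.Eventually.of_forall fun t => ?_
      have h1 := le_vecMax hn (y t) i
      have h2 := vecMin_le hn (y t) j
      simp only [spread]
      linarith
    have := hmin.hasDerivAt_eq_zero hD
    linarith
  have hs : spread hn (y u) = y u i - y u j := by rw [hiM, hjM]; rfl
  rw [hs]
  by_cases hij : i = j
  · subst hij
    simp [hd]
  · have h1 := pair_bound L hL1 hL2 w i j hij hi' hj'
    rw [← hd] at h1
    have h2 : ε * (y u i - y u j) ≤ w i - w j := by
      have h3 : y u j ≤ y u i := by rw [hiM]; exact le_vecMax hn _ j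
      rcases h3.eq_or_lt with h | h
      · rw [h]; simpa using hi' j
      · exact hsep j i h
    have h4 := mul_le_mul_of_nonneg_left h2 (etaNeg_nonneg L hL1)
    linarith

/-- key contraction estimate in the proof of Theorem 2: under the
`ε`-separation condition on `g`, every Filippov solution of
`ẋ_i = -∑_j L i j g(x_j)` satisfies, for `0 ≤ s ≤ t`,
`max_i x t i - min_i x t i ≤ exp(-ε η(-L) (t-s)) (max_i x s i - min_i x s i)`. -/
theorem contraction_estimate
    (n : ℕ) (hn : 2 ≤ n) (L : Matrix (Fin n) (Fin n) ℝ)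
    (hL1 : ∀ i j, i ≠ j → L i j ≤ 0) (hL2 : ∀ i, ∑ j, L i j = 0)
    (g : ℝ → ℝ) (hg : StrictMono g) (ε : ℝ) (hε : 0 < ε)
    (hsep : ∀ α β : ℝ, α ≠ β →
      ∀ v₁ ∈ Set.Icc (leftLim g α) (rightLim g α),
      ∀ v₂ ∈ Set.Icc (leftLim g β) (rightLim g β),
        ε ≤ (v₁ - v₂) / (α - β))
    (x0 : Fin n → ℝ) (x γ : ℝ → Fin n → ℝ)
    (hxcont : Continuous x) (hγmeas : Measurable γ)
    (hγint : LocallyIntegrable γ volume)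
    (hγK : ∀ᵐ t ∂volume, 0 ≤ t →
      ∀ j, γ t j ∈ Set.Icc (leftLim g (x t j)) (rightLim g (x t j)))
    (hsol : ∀ t, 0 ≤ t → ∀ i,
      x t i = x0 i - ∫ s in (0:ℝ)..t, ∑ j, L i j * γ s j) :
    ∀ s t : ℝ, 0 ≤ s → s ≤ t →
      vecMax (by omega) (x t) - vecMin (by omega) (x t) ≤
        Real.exp (-ε * etaNeg L * (t - s)) *
          (vecMax (by omega) (x s) - vecMin (by omega) (x s)) := by
  intro s t hs hst
  have hn0 : 0 < n := by omega
  change spread hn0 (x t) ≤ Real.exp (-ε * etaNeg L * (t - s)) * spread hn0 (x s)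
  -- the vector field
  let F : ℝ → Fin n → ℝ := fun r => L.mulVec (γ r)
  have hFint : LocallyIntegrable F volume := by
    rw [MeasureTheory.locallyIntegrable_iff] at hγint ⊢
    intro k hk
    exact (LinearMap.toContinuousLinearMap (Matrix.mulVecLin L)).integrable_comp (hγint k hk)
  have hFii : ∀ a b, IntervalIntegrable F volume a b := fun a b =>
    intervalIntegrable_iff.mpr <|
      (hFint.integrableOn_isCompact isCompact_uIcc).mono_set Set.uIoc_subset_uIcc
  let y : ℝ → Fin n → ℝ := fun r => x0 - ∫ q in (0:ℝ)..r, F q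
  have hyx : ∀ r, 0 ≤ r → y r = x r := by
    intro r hr
    ext i
    rw [hsol r hr i]
    have := (ContinuousLinearMap.proj (R := ℝ) (φ := fun _ : Fin n => ℝ) i).intervalIntegral_comp_comm
      (hFii 0 r)
    simp only [ContinuousLinearMap.proj_apply] at this
    simp only [y, Pi.sub_apply]
    rw [← this]
    rfl
  have hyder : ∀ᵐ r, ∀ i, HasDerivAt (fun q => y q i) (-∑ k, L i k * γ r k) r := by
    filter_upwards [LocallyIntegrable.ae_hasDerivAt_integral hFint] with r hr i
    have h1 := hasDerivAt_pi.1 (hr 0) i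
    have h2 := h1.const_sub (x0 i)
    exact h2
  have hIac := (hFii s t).norm.absolutelyContinuousOnInterval_intervalIntegral (c := s) (by simp)
  have hVac : AbsolutelyContinuousOnInterval (fun r => spread hn0 (y r)) s t := by
    apply squeeze_zero (fun E => ?_) (fun E => ?_)
      (by simpa using Filter.Tendsto.const_mul (2:ℝ) hIac)
    · exact Finset.sum_nonneg (fun i hi => by positivity)
    · rw [Finset.mul_sum]
      apply Finset.sum_le_sum
      intro i _
      refine (dist_spread_le hn0 _ _).trans (mul_le_mul_of_nonneg_left ?_ zero_le_two)
      have hadd : ∀ r, y r = (x0 - ∫ q in (0:ℝ)..s, F q) - ∫ q in s..r, F q := by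
        intro r
        simp only [y]
        rw [← intervalIntegral.integral_add_adjacent_intervals (hFii 0 s) (hFii s r)]
        abel
      rw [hadd, hadd, dist_sub_left, dist_comm, dist_comm (∫ q in s..(E.2 i).1, ‖F q‖),
        dist_eq_norm, dist_eq_norm,
        intervalIntegral.integral_interval_sub_left (hFii _ _) (hFii _ _),
        intervalIntegral.integral_interval_sub_left (hFii _ _).norm (hFii _ _).norm]
      exact intervalIntegral.norm_integral_le_abs_integral_norm
  set c := ε * etaNeg L with hc
  have hexp : ∀ r, HasDerivAt (fun r => Real.exp (c * r)) (Real.exp (c * r) * c) r := by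
    intro r
    have := ((hasDerivAt_id r).const_mul c).exp
    simpa using this
  have hEac : AbsolutelyContinuousOnInterval (fun r => Real.exp (c * r)) s t := by
    apply ContDiffOn.absolutelyContinuousOnInterval
    apply ContDiff.contDiffOn
    fun_prop
  have hWac := hEac.fun_mul hVac
  have hFTC := hWac.integral_deriv_eq_sub
  have hneg : ∫ r in s..t, deriv (fun r => Real.exp (c * r) * spread hn0 (y r)) r ≤ 0 := by
    rw [intervalIntegral.integral_of_le hst]
    apply integral_nonpos_of_ae
    rw [Filter.EventuallyLE, ae_restrict_iff' measurableSet_Ioc]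
    filter_upwards [hyder, hγK, hVac.ae_differentiableAt] with r h1 h2 h3 hr
    have hr0 : 0 ≤ r := hs.trans hr.1.le
    have h3' := (h3 (by rw [Set.uIcc_of_le hst]; exact ⟨hr.1.le, hr.2⟩)).hasDerivAt
    have h2' := h2 hr0
    have hd := deriv_spread_le hn0 L hL1 hL2 ε hε y (γ r) r _ (by
      intro i j hij
      rw [hyx r hr0] at hij ⊢
      have := hsep (x r j) (x r i) hij.ne' _ (h2' j) _ (h2' i)
      rwa [le_div_iff₀ (sub_pos.2 hij)] at this) h1 h3'
    rw [((hexp r).fun_mul h3').deriv]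
    have := mul_le_mul_of_nonneg_left hd (Real.exp_pos (c * r)).le
    simp only [Pi.zero_apply]
    rw [← hc] at this
    linarith
  rw [hFTC, hyx t (hs.trans hst), hyx s hs] at hneg
  have h5 : -ε * etaNeg L * (t - s) = -(c * t) + c * s := by rw [hc]; ring
  rw [h5, Real.exp_add, Real.exp_neg, mul_assoc, ← div_eq_inv_mul, le_div_iff₀ (Real.exp_pos _)]
  linarith
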